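/- Hardy-type inequality for the (p,A)-Laplacian (case p > n with positive limit at the singularity): let 0 ∈ Ω, Ω* := Ω \ {0}, and p > n. Suppose −Δ_{p,A} is subcritical in Ω, and suppose G ∈ C¹(Ω*) is a positive weakly (p,A)-harmonic function in Ω* with 0 < G < γ on Ω*, G(x) → γ > 0 as x → 0, and G → 0 at infinity in Ω. Define W := ((p−1)/p)^p (|∇G|_A / (G(γ−G)))^p |γ−2G|^{p−2} [2(p−2)G(γ−G) + γ²]. Then for every φ ∈ C_c^∞(Ω*): ∫_{Ω*} |∇φ|_A^p dx ≥ ∫_{Ω*} W |φ|^p dx. -/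

import Mathlib

/-!
The inequality is obtained by testing the equation of `G` with a single function. For `f` of class
`C¹` on `(0, γ)`, the function `ψ = f(G)|φ|^p` is `C¹` with compact support in `Ω \ {0}`, and
`0 = ∫ |∇G|_A^(p-2) ⟨A∇G, ∇ψ⟩
   = ∫ f'(G) |∇G|_A^p |φ|^p + ∫ p f(G) |φ|^(p-2) φ |∇G|_A^(p-2) ⟨A∇G, ∇φ⟩`.
By Cauchy-Schwarz for the `A`-form and Young's inequality this gives
`∫ |∇φ|_A^p ≥ ∫ (-f'(G) - (p-1)|f(G)|^(p/(p-1))) |∇G|_A^p |φ|^p`.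
The choice `f = |h'|^(p-2) h' / h^(p-1)` with `h(t) = (t(γ-t))^((p-1)/p)` (`hardyProfile`) turns
the weight on the right into exactly `W`; here `p > n ≥ 2` makes `f` of class `C¹` also at
`t = γ/2`.

The pointwise form of this computation is `pointwise_young`. Since the equation of `G` is only
assumed for smooth test functions, `weak_ext` extends it to `C¹` ones by mollification. All
integrands are continuous with compact support in `Ω \ {0}`, so integrability is automatic.
-/

open MeasureTheory Set Filter Topology

noncomputable section

variable {n : ℕ}

/-- The `A`-inner product `⟨A(x)ξ, η⟩`. -/
def aInner (A : EuclideanSpace ℝ (Fin n) → Matrix (Fin n) (Fin n) ℝ)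
    (x ξ η : EuclideanSpace ℝ (Fin n)) : ℝ :=
  ∑ i, ∑ j, A x i j * ξ j * η i

/-- `|ξ|_A := ⟨A(x)ξ, ξ⟩^{1/2}`. -/
def aNorm (A : EuclideanSpace ℝ (Fin n) → Matrix (Fin n) (Fin n) ℝ)
    (x ξ : EuclideanSpace ℝ (Fin n)) : ℝ :=
  Real.sqrt (aInner A x ξ ξ)

/-- Assumptions on the matrix field `A`: symmetric, positive definite, locally Hölder
continuous, and locally uniformly elliptic on `Ω`. -/
structure IsEllipticMatrix (Ω : Set (EuclideanSpace ℝ (Fin n)))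
    (A : EuclideanSpace ℝ (Fin n) → Matrix (Fin n) (Fin n) ℝ) : Prop where
  symm : ∀ x ∈ Ω, (A x).IsSymm
  posdef : ∀ x ∈ Ω, ∀ ξ : EuclideanSpace ℝ (Fin n), ξ ≠ 0 → 0 < aInner A x ξ ξ
  locHolder : ∀ K ⊆ Ω, IsCompact K → ∃ C > (0:ℝ), ∃ α ∈ Set.Ioc (0:ℝ) 1,
      ∀ x ∈ K, ∀ y ∈ K, ∀ i j, |A x i j - A y i j| ≤ C * dist x y ^ α
  elliptic : ∀ K ⊆ Ω, IsCompact K → ∃ Θ > (0:ℝ), ∀ x ∈ K, ∀ ξ : EuclideanSpace ℝ (Fin n),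
      Θ⁻¹ * ‖ξ‖ ^ 2 ≤ aInner A x ξ ξ ∧ aInner A x ξ ξ ≤ Θ * ‖ξ‖ ^ 2

/-- Test functions: `C_c^∞` functions with support in `U`. -/
def IsTestFun (U : Set (EuclideanSpace ℝ (Fin n))) (ψ : EuclideanSpace ℝ (Fin n) → ℝ) : Prop :=
  ContDiff ℝ (⊤ : ℕ∞) ψ ∧ HasCompactSupport ψ ∧ tsupport ψ ⊆ U

/-- Weakly `(p,A)`-harmonic in `U`. -/
def IsPAHarmonic (A : EuclideanSpace ℝ (Fin n) → Matrix (Fin n) (Fin n) ℝ) (p : ℝ)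
    (U : Set (EuclideanSpace ℝ (Fin n))) (G : EuclideanSpace ℝ (Fin n) → ℝ) : Prop :=
  ∀ ψ, IsTestFun U ψ →
    ∫ x in U, (aNorm A x (gradient G x)) ^ (p - 2) *
      aInner A x (gradient G x) (gradient ψ x) = 0

/-- Weak solution of `Q_{p,A,V}(u) = g` in `U` (for positive `u`). -/
def IsWeakSolution (A : EuclideanSpace ℝ (Fin n) → Matrix (Fin n) (Fin n) ℝ) (p : ℝ)
    (V g : EuclideanSpace ℝ (Fin n) → ℝ) (U : Set (EuclideanSpace ℝ (Fin n)))
    (u : EuclideanSpace ℝ (Fin n) → ℝ) : Prop :=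
  ∀ ψ, IsTestFun U ψ →
    (∫ x in U, (aNorm A x (gradient u x)) ^ (p - 2) *
        aInner A x (gradient u x) (gradient ψ x))
      + (∫ x in U, V x * u x ^ (p - 1) * ψ x)
      = ∫ x in U, g x * ψ x

/-- Weak supersolution of `Q_{p,A,V}(u) = 0` in `U` (for positive `u`). -/
def IsWeakSupersolution (A : EuclideanSpace ℝ (Fin n) → Matrix (Fin n) (Fin n) ℝ) (p : ℝ)
    (V : EuclideanSpace ℝ (Fin n) → ℝ) (U : Set (EuclideanSpace ℝ (Fin n)))
    (u : EuclideanSpace ℝ (Fin n) → ℝ) : Prop :=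
  ∀ ψ, IsTestFun U ψ → (∀ x, 0 ≤ ψ x) →
    0 ≤ (∫ x in U, (aNorm A x (gradient u x)) ^ (p - 2) *
        aInner A x (gradient u x) (gradient ψ x))
      + (∫ x in U, V x * u x ^ (p - 1) * ψ x)

/-- `Q_{p,A,V}` is subcritical in `Ω`. -/
def IsSubcritical (A : EuclideanSpace ℝ (Fin n) → Matrix (Fin n) (Fin n) ℝ) (p : ℝ)
    (V : EuclideanSpace ℝ (Fin n) → ℝ) (Ω : Set (EuclideanSpace ℝ (Fin n))) : Prop :=
  ∃ W₀ : EuclideanSpace ℝ (Fin n) → ℝ, ContinuousOn W₀ Ω ∧ (∀ x ∈ Ω, 0 ≤ W₀ x) ∧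
    (∃ x ∈ Ω, W₀ x ≠ 0) ∧
    ∀ ψ, IsTestFun Ω ψ →
      0 ≤ ∫ x in Ω, ((aNorm A x (gradient ψ x)) ^ p + (V x - W₀ x) * |ψ x| ^ p)

/-- A null-sequence for `Q_{p,A,V}` in `U`. -/
def IsNullSequence (A : EuclideanSpace ℝ (Fin n) → Matrix (Fin n) (Fin n) ℝ) (p : ℝ)
    (V : EuclideanSpace ℝ (Fin n) → ℝ) (U : Set (EuclideanSpace ℝ (Fin n)))
    (u : ℕ → EuclideanSpace ℝ (Fin n) → ℝ) : Prop :=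
  (∀ k, IsTestFun U (u k)) ∧ (∀ k x, 0 ≤ u k x) ∧
  (∃ B : Set (EuclideanSpace ℝ (Fin n)), IsOpen B ∧ B.Nonempty ∧
      IsCompact (closure B) ∧ closure B ⊆ U ∧
      ∃ c > (0:ℝ), ∀ k, c ≤ (∫ x in B, u k x ^ p) ∧ (∫ x in B, u k x ^ p) ≤ c⁻¹) ∧
  Tendsto (fun k => ∫ x in U,
      ((aNorm A x (gradient (u k) x)) ^ p + V x * |u k x| ^ p)) atTop (𝓝 0)

/-- `V` lies in the local Morrey space `M^q_loc(p;Ω)`. -/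
def InMorreyLoc (p : ℝ) (Ω : Set (EuclideanSpace ℝ (Fin n)))
    (V : EuclideanSpace ℝ (Fin n) → ℝ) : Prop :=
  if p < n then
    ∃ q : ℝ, q > (n : ℝ) / p ∧ ∀ ω : Set (EuclideanSpace ℝ (Fin n)),
      IsOpen ω → IsCompact (closure ω) → closure ω ⊆ Ω →
      ∃ M : ℝ, ∀ y ∈ ω, ∀ r ∈ Set.Ioo (0:ℝ) (Metric.diam ω),
        r ^ ((n : ℝ) / q - n) * (∫ x in ω ∩ Metric.ball y r, |V x|) ≤ M
  else if (n : ℝ) < p then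
    MeasureTheory.LocallyIntegrableOn V Ω
  else
    ∃ q : ℝ, q > (n : ℝ) ∧ ∀ ω : Set (EuclideanSpace ℝ (Fin n)),
      IsOpen ω → IsCompact (closure ω) → closure ω ⊆ Ω →
      ∃ M : ℝ, ∀ y ∈ ω, ∀ r ∈ Set.Ioo (0:ℝ) (Metric.diam ω),
        (Real.log (Metric.diam ω / r)) ^ (q * ((n : ℝ) - 1) / n) *
          (∫ x in ω ∩ Metric.ball y r, |V x|) ≤ M

/-- `G ∈ C^{1,α}(U)`: continuously differentiable with locally `α`-Hölder gradient. -/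
def IsC1Holder (α : ℝ) (U : Set (EuclideanSpace ℝ (Fin n)))
    (G : EuclideanSpace ℝ (Fin n) → ℝ) : Prop :=
  ContDiffOn ℝ 1 G U ∧ ∀ K ⊆ U, IsCompact K → ∃ C : ℝ,
    ∀ x ∈ K, ∀ y ∈ K, ‖gradient G x - gradient G y‖ ≤ C * dist x y ^ α

/-- `G → 0` at infinity in `Ω` (where `G` is considered on `U ⊆ Ω`). -/
def TendstoZeroAtInfinityIn (Ω U : Set (EuclideanSpace ℝ (Fin n)))
    (G : EuclideanSpace ℝ (Fin n) → ℝ) : Prop :=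
  ∀ ε > (0:ℝ), ∃ K ⊆ Ω, IsCompact K ∧ ∀ x ∈ U \ K, G x < ε

open scoped Classical in
/-- Flux integral `∫_S |∇G|_A^p / |∇G| dH^{n-1}`, with integrand `0` where `∇G = 0`. -/
def fluxIntegral (A : EuclideanSpace ℝ (Fin n) → Matrix (Fin n) (Fin n) ℝ) (p : ℝ)
    (G : EuclideanSpace ℝ (Fin n) → ℝ) (S : Set (EuclideanSpace ℝ (Fin n))) : ℝ :=
  ∫ x in S, (if gradient G x = 0 then 0
    else (aNorm A x (gradient G x)) ^ p / ‖gradient G x‖) ∂(μH[(n : ℝ) - 1])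

end

open scoped Convolution

/-! ### Weak equations tested against `C¹` functions -/

/-- If a continuous vector field `b` on `U` is weakly divergence free, i.e. orthogonal to the
differentials of all smooth functions compactly supported in `U`, then it is orthogonal to those
of compactly supported `C¹` functions. For small radii the mollification of `ψ` is supported in a
fixed compact neighbourhood of `tsupport ψ` in `U`, where `b` is bounded, and its differential is
the mollification of `fderiv ℝ ψ`, hence uniformly close to it. -/
lemma weak_ext {E : Type*} [NormedAddCommGroup E] [NormedSpace ℝ E] [FiniteDimensional ℝ E]
    [MeasurableSpace E] [BorelSpace E] (μ : Measure E) [μ.IsAddHaarMeasure]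
    {U : Set E} (hU : IsOpen U)
    {b : E → E} (hb : ContinuousOn b U)
    (h : ∀ ψ : E → ℝ, ContDiff ℝ (⊤ : ℕ∞) ψ → HasCompactSupport ψ → tsupport ψ ⊆ U →
      ∫ x in U, fderiv ℝ ψ x (b x) ∂μ = 0)
    {ψ : E → ℝ} (hψ : ContDiff ℝ 1 ψ) (hc : HasCompactSupport ψ) (hs : tsupport ψ ⊆ U) :
    ∫ x in U, fderiv ℝ ψ x (b x) ∂μ = 0 := by
  have : ProperSpace E := FiniteDimensional.proper ℝ E
  obtain ⟨δ, hδ, hKU⟩ := hc.isCompact.exists_cthickening_subset_open hU hs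
  set K := Metric.cthickening δ (tsupport ψ) with hK
  have hKc : IsCompact K := hc.isCompact.cthickening
  obtain ⟨M, hM⟩ := hKc.exists_bound_of_continuousOn (hb.mono hKU)
  have hM' : ∀ x ∈ K, ‖b x‖ ≤ max M 0 := fun x hx => (hM x hx).trans (le_max_left _ _)
  have hf : Continuous (fderiv ℝ ψ) := hψ.continuous_fderiv one_ne_zero
  have huc : UniformContinuous (fderiv ℝ ψ) :=
    (hc.fderiv ℝ).uniformContinuous_of_continuous hf
  have key : ∀ ε > 0, ‖∫ x in U, fderiv ℝ ψ x (b x) ∂μ‖ ≤ ε * (max M 0 * μ.real K) := by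
    intro ε hε
    obtain ⟨η, hη, hηε⟩ := Metric.uniformContinuous_iff.1 huc ε hε
    have hr : 0 < min η δ / 2 := by positivity
    let χ : ContDiffBump (0 : E) := ⟨min η δ / 4, min η δ / 2, by positivity, by linarith⟩
    have hχη : χ.rOut ≤ η := by
      change min η δ / 2 ≤ η
      linarith [min_le_left η δ]
    have hχδ : χ.rOut ≤ δ := by
      change min η δ / 2 ≤ δ
      linarith [min_le_right η δ]
    let ψ' : E → ℝ := (χ.normed μ) ⋆[ContinuousLinearMap.lsmul ℝ ℝ, μ] ψ
    have hsm : ContDiff ℝ (⊤ : ℕ∞) ψ' :=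
      χ.hasCompactSupport_normed.contDiff_convolution_left _ χ.contDiff_normed
        hψ.continuous.locallyIntegrable
    have hsupp : tsupport ψ' ⊆ K := by
      refine closure_minimal ?_ Metric.isClosed_cthickening
      refine (support_convolution_subset _).trans ?_
      rintro _ ⟨y, hy, z, hz, rfl⟩
      rw [χ.support_normed_eq] at hy
      refine Metric.mem_cthickening_of_dist_le _ z _ _ (subset_tsupport _ hz) ?_
      simp only [Metric.mem_ball, dist_zero_right] at hy
      simp only [dist_eq_norm, add_sub_cancel_right]
      linarith
    have hcs : HasCompactSupport ψ' := HasCompactSupport.of_support_subset_isCompact hKc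
      ((subset_tsupport _).trans hsupp)
    have hfd : ∀ x, dist (fderiv ℝ ψ' x) (fderiv ℝ ψ x) ≤ ε := by
      intro x
      have h1 := hc.hasFDerivAt_convolution_right (ContinuousLinearMap.lsmul ℝ ℝ) (μ := μ)
        (χ.continuous_normed (μ := μ)).locallyIntegrable hψ x
      have h2 : (ContinuousLinearMap.lsmul ℝ ℝ : ℝ →L[ℝ] ℝ →L[ℝ] ℝ).precompR E
          = ContinuousLinearMap.lsmul ℝ ℝ := by
        ext; simp
      rw [h2] at h1
      rw [h1.fderiv]
      refine χ.dist_normed_convolution_le hf.aestronglyMeasurable fun y hy => ?_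
      exact (hηε (lt_of_lt_of_le hy hχη)).le
    have hz : ∀ x ∉ K, fderiv ℝ ψ x = 0 := fun x hx =>
      image_eq_zero_of_notMem_tsupport fun hx' =>
        hx (Metric.self_subset_cthickening _ (tsupport_fderiv_subset ℝ hx'))
    have hz' : ∀ x ∉ K, fderiv ℝ ψ' x = 0 := fun x hx =>
      image_eq_zero_of_notMem_tsupport fun hx' => hx (hsupp (tsupport_fderiv_subset ℝ hx'))
    have e1 := setIntegral_eq_of_subset_of_forall_sdiff_eq_zero (μ := μ)
      (f := fun x => fderiv ℝ ψ x (b x)) hU.measurableSet hKU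
      (fun x hx => by simp [hz x hx.2])
    have e2 := setIntegral_eq_of_subset_of_forall_sdiff_eq_zero (μ := μ)
      (f := fun x => fderiv ℝ ψ' x (b x)) hU.measurableSet hKU
      (fun x hx => by simp [hz' x hx.2])
    rw [h ψ' hsm hcs (hsupp.trans hKU)] at e2
    have hbK := hb.mono hKU
    have i1 : IntegrableOn (fun x => fderiv ℝ ψ x (b x)) K μ :=
      (hf.continuousOn.clm_apply hbK).integrableOn_compact hKc
    have i2 : IntegrableOn (fun x => fderiv ℝ ψ' x (b x)) K μ :=
      ((hsm.continuous_fderiv (by simp)).continuousOn.clm_apply hbK).integrableOn_compact hKc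
    have e3 : ∫ x in U, fderiv ℝ ψ x (b x) ∂μ
        = ∫ x in K, (fderiv ℝ ψ x (b x) - fderiv ℝ ψ' x (b x)) ∂μ := by
      rw [integral_sub i1 i2, e1, ← e2, sub_zero]
    rw [e3, ← mul_assoc]
    refine norm_setIntegral_le_of_norm_le_const hKc.measure_lt_top fun x hx => ?_
    rw [← sub_apply]
    refine (ContinuousLinearMap.le_opNorm _ _).trans ?_
    have := hfd x
    rw [dist_comm, dist_eq_norm] at this
    exact mul_le_mul this (hM' x hx) (norm_nonneg _) hε.le
  have hC : 0 ≤ max M 0 * μ.real K := by positivity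
  have : Tendsto (fun ε : ℝ => ε * (max M 0 * μ.real K)) (𝓝[>] 0) (𝓝 0) := by
    have : Tendsto (fun ε : ℝ => ε * (max M 0 * μ.real K)) (𝓝 0) (𝓝 (0 * (max M 0 * μ.real K))) :=
      (continuous_id.mul continuous_const).tendsto 0
    rw [zero_mul] at this
    exact this.mono_left nhdsWithin_le_nhds
  have := ge_of_tendsto this (eventually_mem_nhdsWithin.mono fun ε hε => key ε hε)
  exact norm_le_zero_iff.1 this

/-! ### The profile function and the pointwise inequality -/

/-- The function `f` on `(0, γ)` for which `f(G)|φ|^p` is the test function in the equation of `G`: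
`f = |h'|^(p-2) h' / h^(p-1)` with `h(t) = (t(γ-t))^((p-1)/p)`. -/
noncomputable def hardyProfile (p γ t : ℝ) : ℝ :=
  ((p - 1) / p) ^ (p - 1) * (|γ - 2 * t| ^ (p - 2) * (γ - 2 * t)) * (t * (γ - t)) ^ (-(p - 1))

/-- The derivative of `hardyProfile p γ` on `(0, γ)`, in closed form. -/
noncomputable def hardyProfile' (p γ t : ℝ) : ℝ :=
  -((p - 1) * ((p - 1) / p) ^ (p - 1) * |γ - 2 * t| ^ (p - 2)
    * (2 * (t * (γ - t)) + (γ - 2 * t) ^ 2) * (t * (γ - t)) ^ (-p))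

lemma hasDerivAt_abs_rpow_mul {p : ℝ} (hp : 2 < p) (y : ℝ) :
    HasDerivAt (fun y : ℝ => |y| ^ (p - 2) * y) ((p - 1) * |y| ^ (p - 2)) y := by
  rcases eq_or_ne y 0 with rfl | hy
  · rw [hasDerivAt_iff_tendsto_slope]
    have h : Tendsto (fun y : ℝ => |y| ^ (p - 2)) (𝓝[≠] 0) (𝓝 ((p - 1) * |(0 : ℝ)| ^ (p - 2))) := by
      have : Continuous fun y : ℝ => |y| ^ (p - 2) :=
        continuous_abs.rpow_const fun _ => Or.inr (by linarith)
      have := this.tendsto 0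
      rw [abs_zero, Real.zero_rpow (by linarith)] at this ⊢
      simpa using this.mono_left nhdsWithin_le_nhds
    refine h.congr' (eventually_mem_nhdsWithin.mono fun y hy => ?_)
    have hy : y ≠ 0 := hy
    simp [slope_def_field, hy]
  · have h1 := ((hasDerivAt_abs hy).rpow_const (p := p - 2)
      (Or.inl (abs_ne_zero.2 hy))).mul (hasDerivAt_id y)
    refine h1.congr_deriv ?_
    have e : |y| ^ (p - 2) = |y| ^ (p - 2 - 1) * |y| := by
      rw [Real.rpow_sub_one (abs_ne_zero.2 hy)]; field_simp
    have e2 : (SignType.sign y : ℝ) * y = |y| := sign_mul_self y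
    simp only [id]
    rw [e]
    linear_combination (p - 2) * |y| ^ (p - 2 - 1) * e2

lemma contDiff_abs_rpow_mul {p : ℝ} (hp : 2 < p) :
    ContDiff ℝ 1 (fun y : ℝ => |y| ^ (p - 2) * y) := by
  rw [contDiff_one_iff_deriv]
  refine ⟨fun y => (hasDerivAt_abs_rpow_mul hp y).differentiableAt, ?_⟩
  rw [show deriv (fun y : ℝ => |y| ^ (p - 2) * y) = fun y => (p - 1) * |y| ^ (p - 2) from
    funext fun y => (hasDerivAt_abs_rpow_mul hp y).deriv]
  exact continuous_const.mul (continuous_abs.rpow_const fun _ => Or.inr (by linarith))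

lemma contDiffAt_hardyProfile {p γ t : ℝ} (hp : 2 < p) (ht : 0 < t) (htγ : t < γ) :
    ContDiffAt ℝ 1 (hardyProfile p γ) t := by
  have hs : t * (γ - t) ≠ 0 := (mul_pos ht (sub_pos.2 htγ)).ne'
  have h1 : ContDiffAt ℝ 1 (fun t : ℝ => |γ - 2 * t| ^ (p - 2) * (γ - 2 * t)) t :=
    ((contDiff_abs_rpow_mul hp).comp (by fun_prop : ContDiff ℝ 1 fun t : ℝ => γ - 2 * t)).contDiffAt
  have h2 : ContDiffAt ℝ 1 (fun t : ℝ => (t * (γ - t)) ^ (-(p - 1))) t :=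
    (by fun_prop : ContDiffAt ℝ 1 (fun t : ℝ => t * (γ - t)) t).rpow_const_of_ne hs
  exact (contDiffAt_const.mul h1).mul h2

lemma hasDerivAt_hardyProfile {p γ t : ℝ} (hp : 2 < p) (ht : 0 < t) (htγ : t < γ) :
    HasDerivAt (hardyProfile p γ) (hardyProfile' p γ t) t := by
  have hs : 0 < t * (γ - t) := mul_pos ht (sub_pos.2 htγ)
  have h0 : HasDerivAt (fun t : ℝ => γ - 2 * t) (-2) t := by
    simpa using ((hasDerivAt_id t).const_mul 2).const_sub γ
  have h1 := (hasDerivAt_abs_rpow_mul hp (γ - 2 * t)).comp t h0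
  have h2 : HasDerivAt (fun t : ℝ => t * (γ - t)) (γ - 2 * t) t := by
    refine ((hasDerivAt_id t).mul ((hasDerivAt_id t).const_sub γ)).congr_deriv ?_
    simp; ring
  have h3 := h2.rpow_const (p := -(p - 1)) (Or.inl hs.ne')
  refine ((h1.const_mul (((p - 1) / p) ^ (p - 1))).mul h3).congr_deriv ?_
  have e1 : -(p - 1) - 1 = -p := by ring
  have e2 : (t * (γ - t)) ^ (-(p - 1)) = (t * (γ - t)) ^ (-p) * (t * (γ - t)) := by
    rw [← e1, Real.rpow_sub_one hs.ne', div_mul_cancel₀ _ hs.ne']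
  simp only [hardyProfile', Function.comp]
  rw [e1, e2]
  ring

/-- The integrand inequality. With `t = G`, `N = |∇G|_A`, `M = |∇φ|_A`, `I = ⟨A∇G, ∇φ⟩` and
`a = φ`, the first summand is `W|φ|^p` and the second is
`|∇G|_A^(p-2) ⟨A∇G, ∇(f(G)|φ|^p)⟩`. Putting `X = (p-1)/p * |γ-2t| / (t(γ-t)) * N * |a|`, the terms
without `I` add up to exactly `-(p-1) X^p`, and the term with `I` is at most `p X^(p-1) M`, so the
claim reduces to Young's inequality `p X^(p-1) M ≤ M^p + (p-1) X^p`. -/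
lemma pointwise_young {p γ t N M I a : ℝ} (hp : 2 < p) (ht : 0 < t) (htγ : t < γ)
    (hN : 0 ≤ N) (hM : 0 ≤ M) (hI : |I| ≤ N * M) :
    (((p - 1) / p) ^ p * (N / (t * (γ - t))) ^ p *
        |γ - 2 * t| ^ (p - 2) * (2 * (p - 2) * t * (γ - t) + γ ^ 2)) * |a| ^ p
      + N ^ (p - 2) * (hardyProfile' p γ t * |a| ^ p * N ^ 2
        + hardyProfile p γ t * (p * |a| ^ (p - 2) * a) * I) ≤ M ^ p := by
  have hs : 0 < t * (γ - t) := mul_pos ht (sub_pos.2 htγ)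
  have hc : 0 < (p - 1) / p := div_pos (by linarith) (by linarith)
  unfold hardyProfile hardyProfile'
  have ew : 2 * (p - 2) * t * (γ - t) + γ ^ 2
      = 2 * p * (t * (γ - t)) + (γ - 2 * t) ^ 2 := by ring
  have ep : (p - 1) * ((p - 1) / p) ^ (p - 1) = p * ((p - 1) / p) ^ p := by
    have : ((p - 1) / p) ^ p = ((p - 1) / p) ^ (p - 1) * ((p - 1) / p) := by
      rw [Real.rpow_sub_one hc.ne', div_mul_cancel₀ _ hc.ne']
    rw [this]; field_simp
  rw [ew, ep]
  set s := t * (γ - t)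
  set c := (p - 1) / p
  set y := γ - 2 * t
  have hq : 0 ≤ |y| := abs_nonneg y
  have hpow : ∀ z : ℝ, 0 ≤ z → z ^ (p - 2) * z ^ 2 = z ^ p := fun z hz => by
    rw [← Real.rpow_natCast z 2, ← Real.rpow_add' hz (by norm_num; linarith)]
    congr 1; norm_num
  have hpow1 : ∀ z : ℝ, 0 ≤ z → z ^ (p - 2) * z = z ^ (p - 1) := fun z hz => by
    nth_rewrite 2 [← Real.rpow_one z]
    rw [← Real.rpow_add' hz (by linarith)]
    congr 1; ring
  set X := c * |y| / s * N * |a| with hX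
  have hX0 : 0 ≤ X := by positivity
  have young : p * X ^ (p - 1) * M ≤ M ^ p + (p - 1) * X ^ p := by
    have hconj : p.HolderConjugate (p / (p - 1)) :=
      Real.HolderConjugate.conjExponent (by linarith)
    have h := Real.young_inequality_of_nonneg hM (Real.rpow_nonneg hX0 (p - 1)) hconj
    have hp1 : p - 1 ≠ 0 := by linarith
    have e : (X ^ (p - 1)) ^ (p / (p - 1)) = X ^ p := by
      rw [← Real.rpow_mul hX0]; congr 1; field_simp
    rw [e] at h
    have hp0 : 0 < p := by linarith
    have h' := mul_le_mul_of_nonneg_left h hp0.le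
    have e' : p * (M ^ p / p + X ^ p / (p / (p - 1))) = M ^ p + (p - 1) * X ^ p := by
      field_simp
    rw [e'] at h'
    linarith
  have eXp : X ^ p = c ^ p * (|y| ^ (p - 2) * y ^ 2) * s ^ (-p) * N ^ p * |a| ^ p := by
    rw [hX, Real.mul_rpow (by positivity) (abs_nonneg a), Real.mul_rpow (by positivity) hN,
      Real.div_rpow (by positivity) hs.le, Real.mul_rpow hc.le hq, ← hpow |y| hq, sq_abs,
      Real.rpow_neg hs.le]
    ring
  have eXp1 : X ^ (p - 1) = c ^ (p - 1) * |y| ^ (p - 1) * s ^ (-(p - 1)) * N ^ (p - 1)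
      * |a| ^ (p - 1) := by
    rw [hX, Real.mul_rpow (by positivity) (abs_nonneg a), Real.mul_rpow (by positivity) hN,
      Real.div_rpow (by positivity) hs.le, Real.mul_rpow hc.le hq,
      Real.rpow_neg hs.le]
    ring
  have cross : N ^ (p - 2) * (c ^ (p - 1) * (|y| ^ (p - 2) * y) * s ^ (-(p - 1))
      * (p * |a| ^ (p - 2) * a) * I) ≤ p * X ^ (p - 1) * M := by
    refine (le_abs_self _).trans ?_
    have hp0 : 0 ≤ p := by linarith
    rw [eXp1, ← hpow1 _ hq, ← hpow1 _ hN, ← hpow1 _ (abs_nonneg a)]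
    simp only [abs_mul, abs_of_nonneg (Real.rpow_nonneg hN (p - 2)),
      abs_of_nonneg (Real.rpow_nonneg hc.le (p - 1)), abs_of_nonneg (Real.rpow_nonneg hq (p - 2)),
      abs_of_nonneg (Real.rpow_nonneg hs.le (-(p - 1))), abs_of_nonneg hp0,
      abs_of_nonneg (Real.rpow_nonneg (abs_nonneg a) (p - 2))]
    have := mul_le_mul_of_nonneg_left hI
      (show 0 ≤ N ^ (p - 2) * (c ^ (p - 1) * (|y| ^ (p - 2) * |y|) * s ^ (-(p - 1))
        * (p * |a| ^ (p - 2) * |a|)) by positivity)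
    refine le_trans (le_of_eq ?_) (this.trans (le_of_eq ?_)) <;> ring
  have eW : (N / s) ^ p = N ^ p * s ^ (-p) := by
    rw [Real.div_rpow hN hs.le, Real.rpow_neg hs.le]; rfl
  rw [eW]
  have eN := hpow N hN
  have : (c ^ p * (N ^ p * s ^ (-p)) * |y| ^ (p - 2) * (2 * p * s + y ^ 2)) * |a| ^ p
      + N ^ (p - 2) * (-(p * c ^ p * |y| ^ (p - 2) * (2 * s + y ^ 2) * s ^ (-p)) * |a| ^ p * N ^ 2)
      = - ((p - 1) * X ^ p) := by
    rw [eXp, ← eN]; ring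
  rw [mul_add]
  linarith

/-! ### The form `⟨A ξ, η⟩` and continuity of the integrands -/

lemma aInner_eq_fderiv {n : ℕ} (A : EuclideanSpace ℝ (Fin n) → Matrix (Fin n) (Fin n) ℝ)
    (x ξ : EuclideanSpace ℝ (Fin n)) (ψ : EuclideanSpace ℝ (Fin n) → ℝ) :
    aInner A x ξ (gradient ψ x) = fderiv ℝ ψ x (WithLp.toLp 2 fun i => ∑ j, A x i j * ξ j) := by
  rw [← inner_gradient_left, aInner, PiLp.inner_apply]
  simp [Finset.sum_mul]

lemma aInner_add_smul {n : ℕ} (A : EuclideanSpace ℝ (Fin n) → Matrix (Fin n) (Fin n) ℝ)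
    (x ξ η ζ : EuclideanSpace ℝ (Fin n)) (a b : ℝ) :
    aInner A x ξ (a • η + b • ζ) = a * aInner A x ξ η + b * aInner A x ξ ζ := by
  simp only [aInner, Finset.mul_sum, ← Finset.sum_add_distrib]
  refine Finset.sum_congr rfl fun i _ => Finset.sum_congr rfl fun j _ => ?_
  simp; ring

lemma aInner_comm {n : ℕ} {A : EuclideanSpace ℝ (Fin n) → Matrix (Fin n) (Fin n) ℝ}
    {x : EuclideanSpace ℝ (Fin n)} (hx : (A x).IsSymm) (ξ η : EuclideanSpace ℝ (Fin n)) :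
    aInner A x ξ η = aInner A x η ξ := by
  simp only [aInner]
  rw [Finset.sum_comm]
  refine Finset.sum_congr rfl fun i _ => Finset.sum_congr rfl fun j _ => ?_
  rw [hx.apply i j]; ring

/-- Cauchy-Schwarz inequality for the positive definite form `⟨A(x)ξ, η⟩`. -/
lemma abs_aInner_le {n : ℕ} {A : EuclideanSpace ℝ (Fin n) → Matrix (Fin n) (Fin n) ℝ}
    {x : EuclideanSpace ℝ (Fin n)} (hx : (A x).IsSymm)
    (hpos : ∀ ξ : EuclideanSpace ℝ (Fin n), ξ ≠ 0 → 0 < aInner A x ξ ξ)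
    (ξ η : EuclideanSpace ℝ (Fin n)) :
    |aInner A x ξ η| ≤ aNorm A x ξ * aNorm A x η := by
  have hz : ∀ ζ : EuclideanSpace ℝ (Fin n), aInner A x ζ 0 = 0 := fun ζ => by simp [aInner]
  have hnn : ∀ ζ : EuclideanSpace ℝ (Fin n), 0 ≤ aInner A x ζ ζ := fun ζ => by
    rcases eq_or_ne ζ 0 with rfl | h
    · exact (hz _).ge
    · exact (hpos ζ h).le
  rcases eq_or_ne η 0 with rfl | h
  · rw [hz, abs_zero]; exact mul_nonneg (Real.sqrt_nonneg _) (Real.sqrt_nonneg _)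
  have hc := hpos η h
  unfold aNorm
  rw [← Real.sqrt_mul (hnn ξ)]
  refine Real.abs_le_sqrt ?_
  -- expand the quadratic form at ⟨η, η⟩ ξ - ⟨ξ, η⟩ η
  have h2 := hnn (aInner A x η η • ξ + (-aInner A x ξ η) • η)
  rw [aInner_add_smul, aInner_comm hx (_ + _) ξ, aInner_comm hx (_ + _) η, aInner_add_smul,
    aInner_add_smul, aInner_comm hx η ξ] at h2
  have h3 : 0 ≤ aInner A x η η * (aInner A x ξ ξ * aInner A x η η - aInner A x ξ η ^ 2) := by
    linarith
  linarith [nonneg_of_mul_nonneg_right h3 hc]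

lemma IsEllipticMatrix.continuousOn {n : ℕ} {Ω : Set (EuclideanSpace ℝ (Fin n))}
    {A : EuclideanSpace ℝ (Fin n) → Matrix (Fin n) (Fin n) ℝ}
    (hA : IsEllipticMatrix Ω A) (hΩ : IsOpen Ω) (i j : Fin n) :
    ContinuousOn (fun x => A x i j) Ω := by
  intro x hx
  refine ContinuousAt.continuousWithinAt ?_
  obtain ⟨r, hr, hrΩ⟩ := Metric.nhds_basis_closedBall.mem_iff.1 (hΩ.mem_nhds hx)
  obtain ⟨C, -, α, hα, h⟩ := hA.locHolder _ hrΩ (isCompact_closedBall x r)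
  refine tendsto_iff_dist_tendsto_zero.2 ?_
  refine squeeze_zero' (g := fun y => C * dist y x ^ α) (.of_forall fun y => dist_nonneg) ?_ ?_
  · filter_upwards [Metric.closedBall_mem_nhds x hr] with y hy
    exact h y hy x (Metric.mem_closedBall_self hr.le) i j
  · have : Continuous fun y => C * dist y x ^ α :=
      continuous_const.mul ((continuous_id.dist continuous_const).rpow_const
        fun _ => Or.inr hα.1.le)
    have := this.tendsto x
    simpa [Real.zero_rpow hα.1.ne'] using this

lemma integrableOn_of_continuousOn_of_zero {E : Type*} [NormedAddCommGroup E]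
    [MeasurableSpace E] [BorelSpace E] {μ : Measure E} [IsFiniteMeasureOnCompacts μ]
    {U K : Set E} {F : E → ℝ} (hU : IsOpen U) (hK : IsCompact K) (hKU : K ⊆ U)
    (hF : ContinuousOn F U) (h : ∀ x ∉ K, F x = 0) : IntegrableOn F U μ :=
  ((hF.mono hKU).integrableOn_compact hK).of_forall_sdiff_eq_zero hU.measurableSet
    fun x hx => h x hx.2

lemma continuousOn_gradient {n : ℕ} {U : Set (EuclideanSpace ℝ (Fin n))} (hU : IsOpen U)
    {g : EuclideanSpace ℝ (Fin n) → ℝ} (hg : ContDiffOn ℝ 1 g U) :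
    ContinuousOn (gradient g) U :=
  (InnerProductSpace.toDual ℝ _).symm.continuous.comp_continuousOn
    (hg.continuousOn_fderiv_of_isOpen hU le_rfl)

lemma continuousOn_aInner {n : ℕ} {U : Set (EuclideanSpace ℝ (Fin n))}
    {A : EuclideanSpace ℝ (Fin n) → Matrix (Fin n) (Fin n) ℝ}
    (hA : ∀ i j, ContinuousOn (fun x => A x i j) U)
    {ξ η : EuclideanSpace ℝ (Fin n) → EuclideanSpace ℝ (Fin n)}
    (hξ : ContinuousOn ξ U) (hη : ContinuousOn η U) :
    ContinuousOn (fun x => aInner A x (ξ x) (η x)) U := by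
  unfold aInner
  refine continuousOn_finsetSum _ fun i _ => continuousOn_finsetSum _ fun j _ => ?_
  have := hA i j
  fun_prop

/-! ### The Hardy inequality -/

theorem hardy_inequality_pA_laplacian_p_gt_n
    {n : ℕ} (hn : 2 ≤ n) (Ω : Set (EuclideanSpace ℝ (Fin n)))
    (hΩopen : IsOpen Ω) (hΩconn : IsConnected Ω)
    (p : ℝ) (hp : 1 < p)
    (A : EuclideanSpace ℝ (Fin n) → Matrix (Fin n) (Fin n) ℝ)
    (hA : IsEllipticMatrix Ω A)
    (h0 : (0 : EuclideanSpace ℝ (Fin n)) ∈ Ω) (hpn : (n : ℝ) < p)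
    (hsub : IsSubcritical A p (fun _ => (0:ℝ)) Ω)
    (γ : ℝ) (hγ : 0 < γ)
    (G : EuclideanSpace ℝ (Fin n) → ℝ)
    (hG1 : ContDiffOn ℝ 1 G (Ω \ {0}))
    (hGrange : ∀ x ∈ Ω \ {0}, 0 < G x ∧ G x < γ)
    (hGharm : IsPAHarmonic A p (Ω \ {0}) G)
    (hGsing : Tendsto G (𝓝[Ω \ {0}] 0) (𝓝 γ))
    (hGinf : TendstoZeroAtInfinityIn Ω (Ω \ {0}) G) :
    ∀ φ, IsTestFun (Ω \ {0}) φ →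
      (∫ x in Ω \ {0},
          (((p - 1) / p) ^ p * (aNorm A x (gradient G x) / (G x * (γ - G x))) ^ p *
            |γ - 2 * G x| ^ (p - 2) * (2 * (p - 2) * G x * (γ - G x) + γ ^ 2)) * |φ x| ^ p)
        ≤ ∫ x in Ω \ {0}, (aNorm A x (gradient φ x)) ^ p := by
  rintro φ ⟨hφ, hφc, hφU⟩
  have hp2 : 2 < p := lt_of_le_of_lt (by exact_mod_cast hn) hpn
  set U := Ω \ {0} with hUdef
  have hU : IsOpen U := hΩopen.sdiff isClosed_singleton
  have hφ1 : ContDiff ℝ 1 φ := hφ.of_le (by exact_mod_cast le_top)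
  have hAc : ∀ i j, ContinuousOn (fun x => A x i j) U := fun i j =>
    (hA.continuousOn hΩopen i j).mono sdiff_subset
  have hGc : ContinuousOn G U := hG1.continuousOn
  have hgG := continuousOn_gradient hU hG1
  have hgφ := continuousOn_gradient hU hφ1.contDiffOn
  have hNc : ContinuousOn (fun x => aNorm A x (gradient G x)) U :=
    (continuousOn_aInner hAc hgG hgG).sqrt
  have hMc : ContinuousOn (fun x => aNorm A x (gradient φ x)) U :=
    (continuousOn_aInner hAc hgφ hgφ).sqrt
  have hNpow : ContinuousOn (fun x => aNorm A x (gradient G x) ^ (p - 2)) U :=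
    hNc.rpow_const fun _ _ => Or.inr (by linarith)
  let ψ : EuclideanSpace ℝ (Fin n) → ℝ := fun x => hardyProfile p γ (G x) * |φ x| ^ p
  have hψ0 : ∀ x, φ x = 0 → ψ x = 0 := fun x hx => by
    simp [ψ, hx, Real.zero_rpow (by linarith : p ≠ 0)]
  have hψs : tsupport ψ ⊆ tsupport φ :=
    closure_mono fun x hx hx' => hx (hψ0 x hx')
  have hψc : HasCompactSupport ψ := hφc.mono' ((subset_tsupport _).trans hψs)
  have hψ1 : ContDiff ℝ 1 ψ := by
    refine contDiff_iff_contDiffAt.2 fun x => ?_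
    by_cases hx : x ∈ tsupport ψ
    swap
    · exact (contDiffAt_const (c := (0 : ℝ))).congr_of_eventuallyEq
        (notMem_tsupport_iff_eventuallyEq.1 hx)
    have hxU := hφU (hψs hx)
    have h1 : ContDiffAt ℝ 1 (fun x => hardyProfile p γ (G x)) x :=
      (contDiffAt_hardyProfile hp2 (hGrange x hxU).1 (hGrange x hxU).2).comp x
        (hG1.contDiffAt (hU.mem_nhds hxU))
    have h2 : ContDiff ℝ 1 (fun x => |φ x| ^ p) :=
      (contDiff_norm_rpow (E := ℝ) hp).comp hφ1
    exact h1.mul h2.contDiffAt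
  have hgψ : ∀ x ∈ U, gradient ψ x = (hardyProfile' p γ (G x) * |φ x| ^ p) • gradient G x
      + (hardyProfile p γ (G x) * (p * |φ x| ^ (p - 2) * φ x)) • gradient φ x := by
    intro x hxU
    have hGd : HasFDerivAt G (fderiv ℝ G x) x :=
      ((hG1.contDiffAt (hU.mem_nhds hxU)).differentiableAt one_ne_zero).hasFDerivAt
    have hφd : HasFDerivAt φ (fderiv ℝ φ x) x := (hφ1.differentiable one_ne_zero x).hasFDerivAt
    have h1 := (hasDerivAt_hardyProfile hp2 (hGrange x hxU).1
      (hGrange x hxU).2).comp_hasFDerivAt x hGd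
    have h2 := (hasDerivAt_abs_rpow (φ x) hp).comp_hasFDerivAt x hφd
    have h3 : HasFDerivAt ψ _ x := h1.mul h2
    rw [gradient, h3.fderiv]
    simp only [Function.comp, map_add, map_smulₛₗ, gradient, smul_smul]
    rw [add_comm]
    simp [mul_comm]
  -- the flux field of `G`; pairing with it is the weak formulation of the equation
  let b : EuclideanSpace ℝ (Fin n) → EuclideanSpace ℝ (Fin n) := fun x =>
    aNorm A x (gradient G x) ^ (p - 2) • WithLp.toLp 2 fun i => ∑ j, A x i j * gradient G x j
  have hbeq : ∀ (g : EuclideanSpace ℝ (Fin n) → ℝ) x, fderiv ℝ g x (b x)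
      = aNorm A x (gradient G x) ^ (p - 2) * aInner A x (gradient G x) (gradient g x) := by
    intro g x
    rw [aInner_eq_fderiv, map_smul, smul_eq_mul]
  have hb : ContinuousOn b U := by
    refine hNpow.smul ((PiLp.continuous_toLp 2 _).comp_continuousOn (continuousOn_pi.2 fun i => ?_))
    refine continuousOn_finsetSum _ fun j _ => ?_
    have := hAc i j
    fun_prop
  have hweak : ∫ x in U, aNorm A x (gradient G x) ^ (p - 2)
      * aInner A x (gradient G x) (gradient ψ x) = 0 := by
    simp_rw [← hbeq]
    refine weak_ext volume hU hb (fun g h1 h2 h3 => ?_) hψ1 hψc (hψs.trans hφU)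
    simp_rw [hbeq]
    exact hGharm g ⟨h1, h2, h3⟩
  have hgrad0 : ∀ g : EuclideanSpace ℝ (Fin n) → ℝ, tsupport g ⊆ tsupport φ →
      ∀ x ∉ tsupport φ, gradient g x = 0 := by
    intro g hg x hx
    have : fderiv ℝ g x = 0 := image_eq_zero_of_notMem_tsupport fun hx' =>
      hx (hg (tsupport_fderiv_subset ℝ hx'))
    simp [gradient, this]
  have iW : IntegrableOn (fun x =>
      (((p - 1) / p) ^ p * (aNorm A x (gradient G x) / (G x * (γ - G x))) ^ p *
        |γ - 2 * G x| ^ (p - 2) * (2 * (p - 2) * G x * (γ - G x) + γ ^ 2)) * |φ x| ^ p) U := by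
    refine integrableOn_of_continuousOn_of_zero hU hφc.isCompact hφU ?_ fun x hx => ?_
    · have c1 : ContinuousOn (fun x => (aNorm A x (gradient G x) / (G x * (γ - G x))) ^ p) U :=
        (hNc.div (by fun_prop) fun x hx =>
          (mul_pos (hGrange x hx).1 (sub_pos.2 (hGrange x hx).2)).ne').rpow_const
          fun _ _ => Or.inr (by linarith)
      have c2 : ContinuousOn (fun x => |γ - 2 * G x| ^ (p - 2)) U :=
        (by fun_prop : ContinuousOn (fun x => |γ - 2 * G x|) U).rpow_const
          fun _ _ => Or.inr (by linarith)
      have c3 : ContinuousOn (fun x => |φ x| ^ p) U :=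
        (hφ1.continuous.abs.rpow_const fun _ => Or.inr (by linarith)).continuousOn
      fun_prop
    · simp [image_eq_zero_of_notMem_tsupport hx, Real.zero_rpow (by linarith : p ≠ 0)]
  have iM : IntegrableOn (fun x => aNorm A x (gradient φ x) ^ p) U := by
    refine integrableOn_of_continuousOn_of_zero hU hφc.isCompact hφU
      (hMc.rpow_const fun _ _ => Or.inr (by linarith)) fun x hx => ?_
    simp [hgrad0 φ subset_rfl x hx, aNorm, aInner, Real.zero_rpow (by linarith : p ≠ 0)]
  have iF : IntegrableOn (fun x => aNorm A x (gradient G x) ^ (p - 2)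
      * aInner A x (gradient G x) (gradient ψ x)) U := by
    refine integrableOn_of_continuousOn_of_zero hU hφc.isCompact hφU
      (hNpow.mul (continuousOn_aInner hAc hgG (continuousOn_gradient hU hψ1.contDiffOn)))
      fun x hx => ?_
    simp [hgrad0 ψ hψs x hx, aInner]
  rw [← add_zero (∫ x in U, _ * |φ x| ^ p), ← hweak, ← integral_add iW iF]
  refine setIntegral_mono_on (iW.add iF) iM hU.measurableSet fun x hx => ?_
  have hsymm := hA.symm x hx.1
  have hpos := hA.posdef x hx.1
  have hNN : aInner A x (gradient G x) (gradient G x) = aNorm A x (gradient G x) ^ 2 := by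
    refine (Real.sq_sqrt ?_).symm
    rcases eq_or_ne (gradient G x) 0 with h | h
    · simp [h, aInner]
    · exact (hpos _ h).le
  rw [hgψ x hx, aInner_add_smul, hNN]
  exact pointwise_young hp2 (hGrange x hx).1 (hGrange x hx).2 (Real.sqrt_nonneg _)
    (Real.sqrt_nonneg _) (abs_aInner_le hsymm hpos _ _)
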